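/- Let m ≥ 3 and k be odd positive integers with k ≤ m. Then there exists a self-conjugate partition λ of m(m+1)/2 + k such that ρ_{m−1} ⊆ λ ⊆ ρ_{m+2}, where ⊆ denotes containment of Young diagrams. Moreover, if k = 1 one can choose λ with ρ_{m−1} ⊆ λ ⊆ ρ_{m+1}, and if k ≥ 3 one can choose λ with ρ_m ⊆ λ ⊆ ρ_{m+2}. -/

import Mathlib

/-- `f` represents a partition of `n`: a weakly decreasing sequence (0-indexed,
padded with zeros) whose parts sum to `n`. Any partition of `n` has at most `n`
nonzero parts, so we may demand `f i = 0` for `i ≥ n`. -/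
def IsPartitionOf (n : ℕ) (f : ℕ → ℕ) : Prop :=
  (∀ i j, i ≤ j → f j ≤ f i) ∧ (∀ i, n ≤ i → f i = 0) ∧ ∑ i ∈ Finset.range n, f i = n

/-- `DominatedBy f g` means `f ⊴ g` in dominance order: every partial sum of `f`
is at most the corresponding partial sum of `g`. -/
def DominatedBy (f g : ℕ → ℕ) : Prop :=
  ∀ k, ∑ i ∈ Finset.range k, f i ≤ ∑ i ∈ Finset.range k, g i

/-- The conjugate (transpose) partition: its `i`-th part (0-indexed) is the number
of parts of `f` that are `> i`. -/
noncomputable def conjugate (f : ℕ → ℕ) : ℕ → ℕ := fun i => Set.ncard {j | i < f j}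

/-- The staircase partition `ρ_m = (m, m-1, …, 2, 1)` (0-indexed). -/
def staircase (m : ℕ) : ℕ → ℕ := fun i => m - i

/-!
Index the cells of a diagram by pairs `(i, j)` of naturals, write `m = 2n + 1`, and call the set of
cells with `i + j = d` the `d`-th antidiagonal. Then `ρ_m` is the union of the antidiagonals
`d < m`, and the last of these meets the main diagonal in `(n, n)`, while the next one, `d = m`,
misses the main diagonal. Adding to `ρ_m` mirror pairs of cells from the antidiagonal `m` therefore
changes the size by an even number, and an odd change needs a modification at the main diagonal.

* For `k = 1`, trade the corner `(n, n)` of `ρ_m` for the pair `(0, m)`, `(m, 0)`.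
* For `k = 2t + 3`, add the hook `(n, n + 1)`, `(n + 1, n)`, `(n + 1, n + 1)` and the `t` pairs
  `(i, m - i)`, `(m - i, i)` with `i < t`. As `k ≤ m` gives `t < n`, these cells are distinct.
-/

open Finset

theorem isPartitionOf_of_antitone {l : ℕ → ℕ} {n N : ℕ} (hl : Antitone l)
    (hN : ∀ i, N ≤ i → l i = 0) (hsum : ∑ i ∈ range N, l i = n) : IsPartitionOf n l := by
  have hn : ∀ i, n ≤ i → l i = 0 := by
    intro i hi
    by_contra hpos
    have hiN : i < N := not_le.1 (mt (hN i) hpos)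
    have hone : ∀ j ∈ range (i + 1), 1 ≤ l j := fun j hj =>
      (Nat.one_le_iff_ne_zero.2 hpos).trans (hl (mem_range_succ_iff.1 hj))
    have hlt : i < n := calc
      i + 1 = ∑ _j ∈ range (i + 1), 1 := by simp
      _ ≤ ∑ j ∈ range (i + 1), l j := sum_le_sum hone
      _ ≤ ∑ j ∈ range N, l j := sum_le_sum_of_subset (range_subset_range.2 hiN)
      _ = n := hsum
    exact hlt.not_ge hi
  refine ⟨fun _ _ hij => hl hij, hn, ?_⟩
  calc ∑ i ∈ range n, l i = ∑ i ∈ range (max n N), l i :=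
        (eventually_constant_sum hn (le_max_left n N)).symm
    _ = ∑ i ∈ range N, l i := eventually_constant_sum hN (le_max_right n N)
    _ = n := hsum

theorem staircase_mono : Monotone staircase := fun _ _ hab i => Nat.sub_le_sub_right hab i

theorem sum_range_staircase {m N : ℕ} (h : m ≤ N) :
    ∑ i ∈ range N, staircase m i = m * (m + 1) / 2 :=
  calc ∑ i ∈ range N, staircase m i = ∑ i ∈ range m, staircase m i :=
        eventually_constant_sum (fun _ hi => Nat.sub_eq_zero_of_le hi) h
    _ = ∑ i ∈ range (m + 1), (m - i) := by simp [sum_range_succ, staircase]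
    _ = ∑ i ∈ range (m + 1), i := sum_flip fun i => i
    _ = m * (m + 1) / 2 := by rw [sum_range_id, Nat.add_sub_cancel, mul_comm]

theorem sum_range_ite_mem {s : Finset ℕ} {N : ℕ} (hs : s ⊆ range N) :
    ∑ i ∈ range N, (if i ∈ s then 1 else 0) = #s := by
  rw [sum_ite_mem, inter_eq_right.2 hs, card_eq_sum_ones]

/-- The Young diagram with row lengths `l`, whose cells are the pairs `(i, j)` with `j < l i`, is
symmetric under transposition. No monotonicity of `l` is required, as it follows from the
symmetry; this is the form in which self-conjugacy is checked for explicit row lengths. -/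
def IsSymmetricDiagram (l : ℕ → ℕ) : Prop :=
  ∀ i j, j < l i ↔ i < l j

namespace IsSymmetricDiagram

variable {l : ℕ → ℕ}

theorem conjugate_eq (h : IsSymmetricDiagram l) : conjugate l = l := by
  funext i
  have hcol : {j | i < l j} = Set.Iio (l i) := Set.ext fun j => (h i j).symm
  rw [conjugate, hcol, Set.ncard_Iio_nat]

theorem antitone (h : IsSymmetricDiagram l) : Antitone l := by
  intro i j hij
  by_contra! hlt
  have hcell : j < l (l i) := (h j (l i)).1 hlt
  exact lt_irrefl (l i) ((h i (l i)).2 (hij.trans_lt hcell))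

theorem isPartitionOf_of_le_staircase {n N : ℕ} (h : IsSymmetricDiagram l)
    (hle : l ≤ staircase N) (hsum : ∑ i ∈ range N, l i = n) : IsPartitionOf n l :=
  isPartitionOf_of_antitone h.antitone
    (fun i hi => Nat.le_zero.1 ((hle i).trans_eq (Nat.sub_eq_zero_of_le hi))) hsum

end IsSymmetricDiagram

/-- The row lengths of `ρ_{2n+1}` with its diagonal corner `(n, n)` traded for the two cells
`(0, 2n+1)` and `(2n+1, 0)`. They are written as an enlargement of `ρ_{2n}`: every row `i ≤ 2n+1`
except row `n` gains one cell, and row `0` gains another one. Meant for `n ≠ 0`. -/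
def tradedStaircase (n i : ℕ) : ℕ :=
  staircase (2 * n) i + (if i ∈ (range (2 * n + 2)).erase n then 1 else 0) +
    if i = 0 then 1 else 0

theorem lt_tradedStaircase_iff {n i j : ℕ} (hn : n ≠ 0) :
    j < tradedStaircase n i ↔
      (i + j < 2 * n + 1 ∧ ¬(i = n ∧ j = n)) ∨ (i = 0 ∧ j = 2 * n + 1) ∨
        (i = 2 * n + 1 ∧ j = 0) := by
  simp only [tradedStaircase, staircase, mem_erase, mem_range]
  split_ifs <;> omega

theorem isSymmetricDiagram_tradedStaircase {n : ℕ} (hn : n ≠ 0) :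
    IsSymmetricDiagram (tradedStaircase n) := by
  intro i j
  rw [lt_tradedStaircase_iff hn, lt_tradedStaircase_iff hn]
  omega

theorem staircase_le_tradedStaircase (n : ℕ) : staircase (2 * n) ≤ tradedStaircase n :=
  fun _ => Nat.le_add_right_of_le (Nat.le_add_right _ _)

theorem tradedStaircase_le_staircase (n : ℕ) : tradedStaircase n ≤ staircase (2 * n + 2) := by
  intro i
  simp only [tradedStaircase, staircase, mem_erase, mem_range]
  split_ifs <;> omega

theorem sum_range_tradedStaircase (n : ℕ) :
    ∑ i ∈ range (2 * n + 2), tradedStaircase n i = (2 * n + 1) * (2 * n + 1 + 1) / 2 + 1 := by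
  have hcard : #((range (2 * n + 2)).erase n) = 2 * n + 1 := by
    rw [card_erase_of_mem (mem_range.2 (by omega)), card_range]
    omega
  have hsucc : (2 * n + 1) * (2 * n + 1 + 1) / 2 = 2 * n * (2 * n + 1) / 2 + (2 * n + 1) := by
    rw [mul_comm, mul_comm (2 * n)]
    exact Nat.triangle_succ (2 * n + 1)
  simp only [tradedStaircase, sum_add_distrib, sum_ite_eq', sum_range_ite_mem (erase_subset _ _),
    sum_range_staircase (Nat.le_add_right (2 * n) 2), hcard, hsucc]
  simp

/-- The row lengths of `ρ_{2n+1}` enlarged by the hook `(n, n+1)`, `(n+1, n)`, `(n+1, n+1)` and by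
the pairs `(i, 2n+1-i)`, `(2n+1-i, i)` for `i < t`. The four indicators count the cells added in
row `i`: those of the pairs above the diagonal, those of the pairs below it, one cell of the hook
in each of the rows `n` and `n+1`, and its corner `(n+1, n+1)`. Meant for `t < n`. -/
def hookedStaircase (n t i : ℕ) : ℕ :=
  staircase (2 * n + 1) i + ((if i ∈ range t then 1 else 0) +
    (if i ∈ Ico (2 * n + 2 - t) (2 * n + 2) then 1 else 0) +
    (if i ∈ Icc n (n + 1) then 1 else 0) + if i = n + 1 then 1 else 0)

theorem lt_hookedStaircase_iff {n t i j : ℕ} (ht : t < n) :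
    j < hookedStaircase n t i ↔
      i + j < 2 * n + 1 ∨ (i + j = 2 * n + 1 ∧ (i < t ∨ j < t)) ∨ (i = n ∧ j = n + 1) ∨
        (i = n + 1 ∧ j = n) ∨ (i = n + 1 ∧ j = n + 1) := by
  simp only [hookedStaircase, staircase, mem_range, mem_Ico, mem_Icc]
  split_ifs <;> omega

theorem isSymmetricDiagram_hookedStaircase {n t : ℕ} (ht : t < n) :
    IsSymmetricDiagram (hookedStaircase n t) := by
  intro i j
  rw [lt_hookedStaircase_iff ht, lt_hookedStaircase_iff ht]
  omega

theorem staircase_le_hookedStaircase (n t : ℕ) :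
    staircase (2 * n + 1) ≤ hookedStaircase n t :=
  fun _ => Nat.le_add_right _ _

theorem hookedStaircase_le_staircase {n t : ℕ} (ht : t < n) :
    hookedStaircase n t ≤ staircase (2 * n + 3) := by
  intro i
  simp only [hookedStaircase, staircase, mem_range, mem_Ico, mem_Icc]
  split_ifs <;> omega

theorem sum_range_hookedStaircase {n t : ℕ} (ht : t < n) :
    ∑ i ∈ range (2 * n + 3), hookedStaircase n t i =
      (2 * n + 1) * (2 * n + 1 + 1) / 2 + (2 * t + 3) := by
  have hupper : range t ⊆ range (2 * n + 3) := range_subset_range.2 (by omega)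
  have hlower : Ico (2 * n + 2 - t) (2 * n + 2) ⊆ range (2 * n + 3) := fun i hi =>
    mem_range.2 ((mem_Ico.1 hi).2.trans (Nat.lt_succ_self _))
  have hhook : Icc n (n + 1) ⊆ range (2 * n + 3) := fun i hi =>
    mem_range.2 ((mem_Icc.1 hi).2.trans_lt (by omega))
  have hcorner : n + 1 ∈ range (2 * n + 3) := mem_range.2 (by omega)
  simp only [hookedStaircase, sum_add_distrib, sum_ite_eq', if_pos hcorner,
    sum_range_ite_mem hupper, sum_range_ite_mem hlower, sum_range_ite_mem hhook,
    sum_range_staircase (Nat.le_add_right (2 * n + 1) 2), card_range, Nat.card_Ico, Nat.card_Icc]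
  omega

theorem exists_selfConjugate_triangle_add_one {m : ℕ} (hm : m ≠ 1) (hmo : Odd m) :
    ∃ l : ℕ → ℕ, IsPartitionOf (m * (m + 1) / 2 + 1) l ∧ conjugate l = l ∧
      staircase (m - 1) ≤ l ∧ l ≤ staircase (m + 1) := by
  obtain ⟨n, rfl⟩ := hmo
  have hsymm := isSymmetricDiagram_tradedStaircase (n := n) (by omega)
  have hle := tradedStaircase_le_staircase n
  exact ⟨tradedStaircase n,
    hsymm.isPartitionOf_of_le_staircase hle (sum_range_tradedStaircase n),
    hsymm.conjugate_eq, staircase_le_tradedStaircase n, hle⟩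

theorem exists_selfConjugate_triangle_add {m k : ℕ} (hmo : Odd m) (hko : Odd k) (hk3 : 3 ≤ k)
    (hk : k ≤ m) :
    ∃ l : ℕ → ℕ, IsPartitionOf (m * (m + 1) / 2 + k) l ∧ conjugate l = l ∧
      staircase m ≤ l ∧ l ≤ staircase (m + 2) := by
  obtain ⟨n, rfl⟩ := hmo
  obtain ⟨t, rfl⟩ : ∃ t, k = 2 * t + 3 := by
    obtain ⟨s, rfl⟩ := hko
    exact ⟨s - 1, by omega⟩
  have ht : t < n := by omega
  have hsymm := isSymmetricDiagram_hookedStaircase ht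
  have hle := hookedStaircase_le_staircase ht
  exact ⟨hookedStaircase n t,
    hsymm.isPartitionOf_of_le_staircase hle (sum_range_hookedStaircase ht),
    hsymm.conjugate_eq, staircase_le_hookedStaircase n t, hle⟩

/-- for odd `m ≥ 3` and odd positive `k ≤ m` there is a
self-conjugate partition `λ` of `m(m+1)/2 + k` with `ρ_{m-1} ⊆ λ ⊆ ρ_{m+2}`;
moreover, if `k = 1` one can take `ρ_{m-1} ⊆ λ ⊆ ρ_{m+1}`, and if `k ≥ 3` one can
take `ρ_m ⊆ λ ⊆ ρ_{m+2}`. -/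
theorem stmt19 (m k : ℕ) (hm : 3 ≤ m) (hmo : Odd m) (hko : Odd k) (hkpos : 0 < k)
    (hk : k ≤ m) :
    (∃ l : ℕ → ℕ, IsPartitionOf (m * (m + 1) / 2 + k) l ∧ conjugate l = l ∧
      (∀ i, staircase (m - 1) i ≤ l i) ∧ (∀ i, l i ≤ staircase (m + 2) i)) ∧
    (k = 1 → ∃ l : ℕ → ℕ, IsPartitionOf (m * (m + 1) / 2 + k) l ∧ conjugate l = l ∧
      (∀ i, staircase (m - 1) i ≤ l i) ∧ (∀ i, l i ≤ staircase (m + 1) i)) ∧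
    (3 ≤ k → ∃ l : ℕ → ℕ, IsPartitionOf (m * (m + 1) / 2 + k) l ∧ conjugate l = l ∧
      (∀ i, staircase m i ≤ l i) ∧ (∀ i, l i ≤ staircase (m + 2) i)) := by
  have hone := exists_selfConjugate_triangle_add_one (m := m) (by omega) hmo
  have hthree := exists_selfConjugate_triangle_add hmo hko (hk := hk)
  refine ⟨?_, by rintro rfl; exact hone, hthree⟩
  obtain rfl | h3 : k = 1 ∨ 3 ≤ k := by obtain ⟨s, rfl⟩ := hko; omega
  · obtain ⟨l, hl, hconj, hlow, hup⟩ := hone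
    exact ⟨l, hl, hconj, hlow, hup.trans (staircase_mono (Nat.le_succ _))⟩
  · obtain ⟨l, hl, hconj, hlow, hup⟩ := hthree h3
    exact ⟨l, hl, hconj, (staircase_mono (Nat.sub_le m 1)).trans hlow, hup⟩
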